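/- Let F be a finite collection of finite sets, all of the same cardinality α. Then F is an hke collection if and only if F is isomorphic to a subcollection of the typical collection for α. -/

import Mathlib

open Finset

/-- The union of a finite collection of finite sets. -/
def famUnion (Γ : Finset (Finset ℕ)) : Finset ℕ := Γ.sup id

/-- The intersection of a finite collection of finite sets
(equal to the usual intersection when the collection is nonempty). -/
def famInter (Γ : Finset (Finset ℕ)) : Finset ℕ :=
  (Γ.sup id).filter (fun x => ∀ A ∈ Γ, x ∈ A)

/-- `F` is a hereditary König–Egerváry (hke) collection with `α(F) = α`:
`α` is a positive integer and `|⋃Γ| + |⋂Γ| = 2α` for every nonempty subcollection `Γ` of `F`. -/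
def IsHKE (F : Finset (Finset ℕ)) (α : ℕ) : Prop :=
  0 < α ∧ ∀ Γ ⊆ F, Γ.Nonempty → (famUnion Γ).card + (famInter Γ).card = 2 * α

/-- The typical collection for `α`: all subsets `S` of `{1, …, 2α}` such that
for every `i ∈ {1, …, α}`, `i ∈ S ↔ i + α ∉ S`. -/
def typicalCollection (α : ℕ) : Finset (Finset ℕ) :=
  (Finset.Icc 1 (2 * α)).powerset.filter
    (fun S => ∀ i ∈ Finset.Icc 1 α, (i ∈ S ↔ i + α ∉ S))

/-- Two collections are isomorphic: there is a bijection `g : ⋃F₁ → ⋃F₂` such that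
`g[S] ∈ F₂` for every `S ∈ F₁` and `g⁻¹[S] ∈ F₁` for every `S ∈ F₂`. -/
def CollIso (F₁ F₂ : Finset (Finset ℕ)) : Prop :=
  ∃ g : ℕ → ℕ, Set.BijOn g ↑(famUnion F₁) ↑(famUnion F₂) ∧
    (∀ S ∈ F₁, S.image g ∈ F₂) ∧
    (∀ S ∈ F₂, (famUnion F₁).filter (fun x => g x ∈ S) ∈ F₁)

/-!
Call `f : A → B` a complementary matching of `F` if it is a bijection between disjoint sets which
cover `⋃ F`, and every member of `F` contains exactly one of `a` and `f a` for each `a ∈ A`. The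
shift `i ↦ i + α` is one for the typical collection, and complementary matchings are the same thing
as isomorphisms onto a subcollection of it: number `A` by `1, …, α` and let `f a` inherit the label
of `a` plus `α`.

A matching sends the part of `⋂ Γ` inside `A` to the complement of `⋃ Γ` inside `B`, and vice versa,
which gives `|⋃ Γ| + |⋂ Γ| = 2α`. Conversely, let `F` be hke, `A ∈ F`, and pad `⋃ F` to a set `X`
with `2α` elements. For `T ⊆ F` the hke identity for `T ∪ {A}` says that as many points of `A` lie
in every member of `T` as points of `X \ A` lie in no member of `T`. By Möbius inversion, each
membership pattern is as frequent in `A` as the opposite pattern is in `X \ A`, so a matching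
exists.
-/

section Counting

variable {ι κ : Type*}

lemma card_filter_eq_of_bijOn {f : ι → κ} {s : Finset ι} {t : Finset κ} {P : ι → Prop}
    {Q : κ → Prop} [DecidablePred P] [DecidablePred Q] (hf : Set.BijOn f s t)
    (hPQ : ∀ x ∈ s, P x ↔ Q (f x)) : #{x ∈ s | P x} = #{y ∈ t | Q y} := by
  refine card_nbij f (fun x hx ↦ ?_) (hf.injOn.mono (coe_subset.2 (filter_subset _ _)))
    (fun y hy ↦ ?_)
  · obtain ⟨hxs, hxP⟩ := mem_filter.1 hx
    exact mem_filter.2 ⟨hf.mapsTo hxs, (hPQ x hxs).1 hxP⟩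
  · obtain ⟨hyt, hyQ⟩ := mem_filter.1 hy
    obtain ⟨x, hxs, rfl⟩ := hf.surjOn hyt
    exact ⟨x, mem_filter.2 ⟨hxs, (hPQ x hxs).2 hyQ⟩, rfl⟩

lemma exists_bijOn_of_card_eq [Nonempty κ] {s : Finset ι} {t : Finset κ} (h : #s = #t) :
    ∃ f : ι → κ, Set.BijOn f s t :=
  s.finite_toSet.exists_bijOn_of_encard_eq (by simp only [Set.encard_coe_eq_coe_finsetCard, h])

lemma exists_bijOn_of_card_fiber_eq {β : Type*} [Nonempty κ] [DecidableEq β] {s : Finset ι}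
    {t : Finset κ} {p : ι → β} {q : κ → β}
    (h : ∀ b, #{x ∈ s | p x = b} = #{y ∈ t | q y = b}) :
    ∃ f : ι → κ, Set.BijOn f s t ∧ ∀ x ∈ s, q (f x) = p x := by
  have hfiber (b : β) : ∃ f : ι → κ,
      Set.BijOn f ({x ∈ s | p x = b} : Finset ι) ({y ∈ t | q y = b} : Finset κ) :=
    exists_bijOn_of_card_eq (h b)
  choose f hf using hfiber
  have hmaps {x : ι} (hx : x ∈ s) : f (p x) x ∈ t ∧ q (f (p x) x) = p x :=
    mem_filter.1 ((hf (p x)).mapsTo (mem_filter.2 ⟨hx, rfl⟩))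
  refine ⟨fun x ↦ f (p x) x, ⟨fun x hx ↦ (hmaps hx).1, fun x hx y hy hxy ↦ ?_, fun y hy ↦ ?_⟩,
    fun x hx ↦ (hmaps hx).2⟩
  · have hpxy : p x = p y := by rw [← (hmaps hx).2, ← (hmaps hy).2]; exact congrArg q hxy
    refine (hf (p y)).injOn (mem_filter.2 ⟨hx, hpxy⟩) (mem_filter.2 ⟨hy, rfl⟩) ?_
    simpa only [hpxy] using hxy
  · obtain ⟨x, hx, hxy⟩ := (hf (q y)).surjOn (mem_filter.2 ⟨hy, rfl⟩)
    obtain ⟨hxs, hpx⟩ := mem_filter.1 hx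
    exact ⟨x, hxs, by simpa only [hpx] using hxy⟩

variable {P : Type*} [PartialOrder P] [OrderTop P] [LocallyFiniteOrder P] [DecidableEq P]
  [DecidableLE P]

lemma card_filter_le_eq_sum_card_fiber (s : Finset ι) (p : ι → P) (b : P) :
    #{x ∈ s | b ≤ p x} = ∑ c ∈ Ici b, #{x ∈ s | p x = c} := by
  rw [card_eq_sum_card_fiberwise (f := p) (t := Ici b)
    fun x hx ↦ mem_Ici.2 (mem_filter.1 hx).2]
  refine sum_congr rfl fun c hc ↦ ?_
  rw [filter_filter]
  congr 1
  exact filter_congr fun x _ ↦ and_iff_right_of_imp fun hx ↦ hx ▸ mem_Ici.1 hc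

lemma card_fiber_eq_of_card_filter_le_eq {s : Finset ι} {t : Finset κ} {p : ι → P} {q : κ → P}
    (h : ∀ b, #{x ∈ s | b ≤ p x} = #{y ∈ t | b ≤ q y}) (b : P) :
    #{x ∈ s | p x = b} = #{y ∈ t | q y = b} := by
  zify
  rw [IncidenceAlgebra.moebius_inversion_top (𝕜 := ℤ) (fun c ↦ (#{x ∈ s | p x = c} : ℤ))
      (fun c ↦ (#{x ∈ s | c ≤ p x} : ℤ))
      (fun c ↦ mod_cast card_filter_le_eq_sum_card_fiber s p c) b,
    IncidenceAlgebra.moebius_inversion_top (𝕜 := ℤ) (fun c ↦ (#{y ∈ t | q y = c} : ℤ))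
      (fun c ↦ (#{y ∈ t | c ≤ q y} : ℤ))
      (fun c ↦ mod_cast card_filter_le_eq_sum_card_fiber t q c) b]
  simp only [h]

end Counting

lemma exists_bijOn_mem_iff_notMem {γ : Type*} [DecidableEq γ] [Nonempty γ]
    {F : Finset (Finset γ)} {A B : Finset γ}
    (h : ∀ T ⊆ F, #{x ∈ A | ∀ S ∈ T, x ∈ S} = #{x ∈ B | ∀ S ∈ T, x ∉ S}) :
    ∃ f : γ → γ, Set.BijOn f A B ∧ ∀ S ∈ F, ∀ a ∈ A, f a ∈ S ↔ a ∉ S := by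
  let pattern (x : γ) : Finset F := {S | x ∈ S.1}
  have hfiber := card_fiber_eq_of_card_filter_le_eq (s := A) (t := B) (p := pattern)
    (q := fun x ↦ (pattern x)ᶜ) fun T ↦ by
      simpa [pattern, subset_iff] using h (T.map (.subtype _)) (map_subtype_subset T)
  obtain ⟨f, hf, hpattern⟩ := exists_bijOn_of_card_fiber_eq hfiber
  refine ⟨f, hf, fun S hS a ha ↦ ?_⟩
  have hSa := congrArg ((⟨S, hS⟩ : F) ∈ ·) (hpattern a ha)
  simp only [pattern, mem_compl, mem_filter, mem_univ, true_and, eq_iff_iff] at hSa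
  tauto

section Families

variable {F Γ T : Finset (Finset ℕ)} {A X : Finset ℕ} {g : ℕ → ℕ} {x : ℕ}

lemma mem_famUnion : x ∈ famUnion Γ ↔ ∃ S ∈ Γ, x ∈ S := by
  simp [famUnion, mem_sup]

lemma subset_famUnion (hA : A ∈ Γ) : A ⊆ famUnion Γ := le_sup (f := id) hA

lemma famUnion_subset_iff : famUnion Γ ⊆ X ↔ ∀ S ∈ Γ, S ⊆ X := Finset.sup_le_iff

lemma famUnion_mono (h : Γ ⊆ F) : famUnion Γ ⊆ famUnion F := sup_mono h

lemma famInter_subset_famUnion : famInter Γ ⊆ famUnion Γ := filter_subset _ _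

lemma mem_famInter (hΓ : Γ.Nonempty) : x ∈ famInter Γ ↔ ∀ S ∈ Γ, x ∈ S := by
  obtain ⟨S, hS⟩ := hΓ
  exact mem_filter.trans (and_iff_right_of_imp fun hx ↦ subset_famUnion hS (hx S hS))

lemma famInter_insert : famInter (insert A T) = {x ∈ A | ∀ S ∈ T, x ∈ S} := by
  ext x
  simp [mem_famInter (insert_nonempty A T)]

lemma sdiff_famUnion_insert :
    X \ famUnion (insert A T) = {x ∈ X \ A | ∀ S ∈ T, x ∉ S} := by
  ext x
  simp [mem_famUnion, and_assoc]

lemma famUnion_image : famUnion (Γ.image (image g)) = (famUnion Γ).image g := by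
  ext y
  simp only [mem_famUnion, mem_image, exists_exists_and_eq_and]
  grind

lemma mem_image_iff_of_injOn_famUnion (hg : Set.InjOn g (famUnion Γ)) (hA : A ∈ Γ)
    (hx : x ∈ famUnion Γ) : g x ∈ A.image g ↔ x ∈ A := by
  rw [← mem_coe, coe_image, hg.mem_image_iff (mod_cast subset_famUnion hA) hx, mem_coe]

lemma famInter_image (hg : Set.InjOn g (famUnion Γ)) :
    famInter (Γ.image (image g)) = (famInter Γ).image g := by
  have hfamInter : ∀ x ∈ famUnion Γ, (∀ S ∈ Γ.image (image g), g x ∈ S) ↔ ∀ S ∈ Γ, x ∈ S :=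
    fun x hx ↦ forall_mem_image.trans <|
      forall₂_congr fun S hS ↦ mem_image_iff_of_injOn_famUnion hg hS hx
  calc famInter (Γ.image (image g))
      = {y ∈ (famUnion Γ).image g | ∀ S ∈ Γ.image (image g), y ∈ S} :=
        congrArg (filter _) famUnion_image
    _ = (famInter Γ).image g := by
        rw [filter_image]
        exact congrArg (image g) (filter_congr hfamInter)

lemma collIso_image_of_injOn (hg : Set.InjOn g (famUnion F)) : CollIso F (F.image (image g)) := by
  refine ⟨g, ?_, fun S hS ↦ mem_image_of_mem _ hS, forall_mem_image.2 fun S hS ↦ ?_⟩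
  · rw [famUnion_image, coe_image]
    exact hg.bijOn_image
  · have hpreimage : {x ∈ famUnion F | g x ∈ S.image g} = S := by
      rw [filter_congr fun x hx ↦ mem_image_iff_of_injOn_famUnion hg hS hx, filter_mem_eq_inter,
        inter_eq_right.2 (subset_famUnion hS)]
    rwa [hpreimage]

end Families

section HKE

variable {F F' : Finset (Finset ℕ)} {A : Finset ℕ} {α : ℕ}

lemma IsHKE.mono (hF : IsHKE F α) (h : F' ⊆ F) : IsHKE F' α :=
  ⟨hF.1, fun Γ hΓ ↦ hF.2 Γ (hΓ.trans h)⟩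

lemma IsHKE.card_eq (hF : IsHKE F α) (hA : A ∈ F) : #A = α := by
  have hsum := hF.2 {A} (singleton_subset_iff.2 hA) (singleton_nonempty A)
  have hunion : famUnion {A} = A := sup_singleton
  have hinter : famInter {A} = A := by simpa using famInter_insert (A := A) (T := ∅)
  rw [hunion, hinter] at hsum
  lia

lemma CollIso.isHKE (h : CollIso F F') (hF' : IsHKE F' α) : IsHKE F α := by
  obtain ⟨g, hg, hmaps, -⟩ := h
  refine ⟨hF'.1, fun Γ hΓ hne ↦ ?_⟩
  have hinj : Set.InjOn g (famUnion Γ) := hg.injOn.mono (mod_cast famUnion_mono hΓ)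
  have hsum := hF'.2 (Γ.image (image g)) (forall_mem_image.2 fun S hS ↦ hmaps S (hΓ hS))
    (hne.image _)
  rwa [famUnion_image, famInter_image hinj, card_image_of_injOn hinj,
    card_image_of_injOn (hinj.mono (mod_cast famInter_subset_famUnion))] at hsum

end HKE

/-- A complementary matching of a collection `F`: a bijection `f` from `A` onto a disjoint set `B`
such that every member of `F` is a subset of `A ∪ B` containing exactly one point of each pair
`{a, f a}`. It expresses isomorphism with a subcollection of the typical collection without choosing
labels. The values of `f` outside `A` are irrelevant. -/
structure IsComplementaryMatching {γ : Type*} [DecidableEq γ] (F : Finset (Finset γ))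
    (A B : Finset γ) (f : γ → γ) : Prop where
  disjoint : Disjoint A B
  bijOn : Set.BijOn f A B
  subset_union : ∀ S ∈ F, S ⊆ A ∪ B
  apply_mem_iff : ∀ S ∈ F, ∀ a ∈ A, f a ∈ S ↔ a ∉ S

namespace IsComplementaryMatching

section General

variable {γ : Type*} [DecidableEq γ] {F F' : Finset (Finset γ)} {A B : Finset γ} {f : γ → γ}

lemma mono (hf : IsComplementaryMatching F A B f) (h : F' ⊆ F) :
    IsComplementaryMatching F' A B f where
  disjoint := hf.disjoint
  bijOn := hf.bijOn
  subset_union S hS := hf.subset_union S (h hS)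
  apply_mem_iff S hS := hf.apply_mem_iff S (h hS)

lemma card_union (hf : IsComplementaryMatching F A B f) : #(A ∪ B) = 2 * #A := by
  rw [card_union_of_disjoint hf.disjoint, ← hf.bijOn.finsetCard_eq, two_mul]

lemma card_filter_forall_mem (hf : IsComplementaryMatching F A B f) :
    #{x ∈ A ∪ B | ∀ S ∈ F, x ∈ S} = #{x ∈ A ∪ B | ∀ S ∈ F, x ∉ S} := by
  have hAB : #{x ∈ A | ∀ S ∈ F, x ∈ S} = #{x ∈ B | ∀ S ∈ F, x ∉ S} :=
    card_filter_eq_of_bijOn hf.bijOn fun a ha ↦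
      forall₂_congr fun S hS ↦ by rw [hf.apply_mem_iff S hS a ha, not_not]
  have hBA : #{x ∈ A | ∀ S ∈ F, x ∉ S} = #{x ∈ B | ∀ S ∈ F, x ∈ S} :=
    card_filter_eq_of_bijOn hf.bijOn fun a ha ↦
      forall₂_congr fun S hS ↦ (hf.apply_mem_iff S hS a ha).symm
  simp only [filter_union, card_union_of_disjoint (disjoint_filter_filter hf.disjoint), hAB, hBA,
    add_comm]

lemma exists_labelling (hf : IsComplementaryMatching F A B f) :
    ∃ g : γ → ℕ, Set.BijOn g A (Icc 1 #A : Finset ℕ) ∧ ∀ a ∈ A, g (f a) = g a + #A := by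
  obtain ⟨e, he⟩ := exists_bijOn_of_card_eq (s := A) (t := Icc 1 #A) (by simp)
  obtain rfl | ⟨a₀, -⟩ := A.eq_empty_or_nonempty
  · exact ⟨e, he, by simp⟩
  have : Nonempty γ := ⟨a₀⟩
  refine ⟨fun x ↦ if x ∈ A then e x else e (Function.invFunOn f A x) + #A, ?_, fun a ha ↦ ?_⟩
  · exact he.congr fun a ha ↦ (if_pos (mem_coe.1 ha)).symm
  · have hfa : f a ∉ A := disjoint_right.1 hf.disjoint (hf.bijOn.mapsTo ha)
    simp only [if_neg hfa, if_pos ha, hf.bijOn.injOn.leftInvOn_invFunOn ha]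

lemma injOn_labelling (hf : IsComplementaryMatching F A B f) {g : γ → ℕ}
    (hgA : Set.BijOn g A (Icc 1 #A : Finset ℕ)) (hgf : ∀ a ∈ A, g (f a) = g a + #A) :
    Set.InjOn g ↑(A ∪ B) := by
  rw [coe_union, Set.injOn_union (mod_cast hf.disjoint), ← hf.bijOn.image_eq]
  refine ⟨hgA.injOn, ?_, ?_⟩
  · rintro _ ⟨a, ha, rfl⟩ _ ⟨b, hb, rfl⟩ hab
    rw [hgf a ha, hgf b hb, add_left_inj] at hab
    rw [hgA.injOn ha hb hab]
  · rintro a ha _ ⟨b, hb, rfl⟩ hab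
    have hga := mem_Icc.1 (hgA.mapsTo ha)
    have hgb := mem_Icc.1 (hgA.mapsTo hb)
    have := hgf b hb
    lia

lemma image_labelling_mem_typicalCollection (hf : IsComplementaryMatching F A B f) {g : γ → ℕ}
    (hgA : Set.BijOn g A (Icc 1 #A : Finset ℕ)) (hgf : ∀ a ∈ A, g (f a) = g a + #A)
    {S : Finset γ} (hS : S ∈ F) : S.image g ∈ typicalCollection #A := by
  have hmem {x : γ} (hx : x ∈ A ∪ B) : g x ∈ S.image g ↔ x ∈ S := by
    rw [← mem_coe, coe_image, (hf.injOn_labelling hgA hgf).mem_image_iff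
      (mod_cast hf.subset_union S hS) hx, mem_coe]
  refine mem_filter.2 ⟨mem_powerset.2 (image_subset_iff.2 fun x hx ↦ ?_), fun i hi ↦ ?_⟩
  · obtain hxA | hxB := mem_union.1 (hf.subset_union S hS hx)
    · have := mem_Icc.1 (hgA.mapsTo hxA)
      exact mem_Icc.2 (by lia)
    · obtain ⟨a, ha, rfl⟩ := hf.bijOn.surjOn hxB
      have := mem_Icc.1 (hgA.mapsTo ha)
      have := hgf a ha
      exact mem_Icc.2 (by lia)
  · obtain ⟨a, ha, rfl⟩ := hgA.surjOn hi
    rw [← hgf a ha, hmem (mem_union_left B ha), hmem (mem_union_right A (hf.bijOn.mapsTo ha)),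
      hf.apply_mem_iff S hS a ha, not_not]

end General

variable {F : Finset (Finset ℕ)} {A B : Finset ℕ} {f : ℕ → ℕ}

lemma exists_collIso (hf : IsComplementaryMatching F A B f) :
    ∃ F' ⊆ typicalCollection #A, CollIso F F' := by
  obtain ⟨g, hgA, hgf⟩ := hf.exists_labelling
  refine ⟨F.image (image g), image_subset_iff.2 fun S hS ↦
    hf.image_labelling_mem_typicalCollection hgA hgf hS, collIso_image_of_injOn ?_⟩
  exact (hf.injOn_labelling hgA hgf).mono (mod_cast famUnion_subset_iff.2 hf.subset_union)

lemma card_famUnion_add_card_famInter (hf : IsComplementaryMatching F A B f) (hF : F.Nonempty) :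
    #(famUnion F) + #(famInter F) = 2 * #A := by
  have hunion : famUnion F ⊆ A ∪ B := famUnion_subset_iff.2 hf.subset_union
  have hinter : famInter F = {x ∈ A ∪ B | ∀ S ∈ F, x ∈ S} := by
    ext x
    rw [mem_filter, ← mem_famInter hF]
    exact (and_iff_right_of_imp fun hx ↦ hunion (famInter_subset_famUnion hx)).symm
  have hcompl : (A ∪ B) \ famUnion F = {x ∈ A ∪ B | ∀ S ∈ F, x ∉ S} := by
    ext x
    simp [mem_famUnion]
  rw [hinter, hf.card_filter_forall_mem, ← hcompl, add_comm, card_sdiff_add_card_eq_card hunion,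
    hf.card_union]

lemma isHKE (hf : IsComplementaryMatching F A B f) (hA : A.Nonempty) : IsHKE F #A :=
  ⟨hA.card_pos, fun _ hΓ hne ↦ (hf.mono hΓ).card_famUnion_add_card_famInter hne⟩

end IsComplementaryMatching

lemma IsHKE.exists_isComplementaryMatching {F : Finset (Finset ℕ)} {α : ℕ} {A : Finset ℕ}
    (hF : IsHKE F α) (hA : A ∈ F) : ∃ B f, IsComplementaryMatching F A B f := by
  have hcard : #(famUnion F) ≤ 2 * α := by
    have := hF.2 F Subset.rfl ⟨A, hA⟩
    lia
  obtain ⟨X, hFX, hX⟩ := Infinite.exists_superset_card_eq (famUnion F) (2 * α) hcard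
  have hbalanced : ∀ T ⊆ F, #{x ∈ A | ∀ S ∈ T, x ∈ S} = #{x ∈ X \ A | ∀ S ∈ T, x ∉ S} := by
    intro T hT
    have hAT : insert A T ⊆ F := insert_subset hA hT
    have hsum := hF.2 (insert A T) hAT (insert_nonempty A T)
    rw [← famInter_insert, ← sdiff_famUnion_insert,
      card_sdiff_of_subset ((famUnion_mono hAT).trans hFX)]
    lia
  obtain ⟨f, hf, hmem⟩ := exists_bijOn_mem_iff_notMem hbalanced
  refine ⟨X \ A, f, disjoint_sdiff, hf, fun S hS ↦ ?_, hmem⟩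
  rw [union_sdiff_of_subset ((subset_famUnion hA).trans hFX)]
  exact (subset_famUnion hS).trans hFX

lemma isComplementaryMatching_typicalCollection (α : ℕ) :
    IsComplementaryMatching (typicalCollection α) (Icc 1 α) (Icc (1 + α) (2 * α)) (· + α) where
  disjoint := disjoint_left.2 fun i hi hi' ↦ by
    rw [mem_Icc] at hi hi'
    lia
  bijOn := by
    rw [two_mul, ← image_add_right_Icc, coe_image]
    exact (add_left_injective α).injOn.bijOn_image
  subset_union S hS i hi := by
    have := mem_Icc.1 (mem_powerset.1 (mem_filter.1 hS).1 hi)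
    rw [mem_union, mem_Icc, mem_Icc]
    lia
  apply_mem_iff S hS i hi := by rw [(mem_filter.1 hS).2 i hi, not_not]

lemma isHKE_typicalCollection {α : ℕ} (hα : 0 < α) : IsHKE (typicalCollection α) α := by
  simpa using (isComplementaryMatching_typicalCollection α).isHKE (nonempty_Icc.2 hα)

/-- a finite collection `F` of finite sets, all of cardinality `α`, is an
hke collection iff `F` is isomorphic to a subcollection of the typical collection
for `α`. -/
theorem isHKE_iff_iso_subcollection_typical (F : Finset (Finset ℕ)) (α : ℕ) (hα : 0 < α)
    (hcard : ∀ A ∈ F, A.card = α) :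
    (∃ β, IsHKE F β) ↔ ∃ F' ⊆ typicalCollection α, CollIso F F' := by
  constructor
  · rintro ⟨β, hF⟩
    obtain rfl | ⟨A, hA⟩ := F.eq_empty_or_nonempty
    · exact ⟨∅, empty_subset _, by
        simpa using collIso_image_of_injOn (F := ∅) Function.injective_id.injOn⟩
    · obtain ⟨B, f, hf⟩ := hF.exists_isComplementaryMatching hA
      exact hcard A hA ▸ hf.exists_collIso
  · rintro ⟨F', hF', hiso⟩
    exact ⟨α, hiso.isHKE ((isHKE_typicalCollection hα).mono hF')⟩
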